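/- arXiv:1403.5389 — 3 statements merged into one kernel-verified Lean document; each statement's English description precedes it below -/
import Mathlib

section
/- Let (L, ⪯) be a finite meet semilattice with n elements in which some element covers at least two elements of L. Then there exist a GCD closed set S = {x_1, …, x_n} of positive integers with (S, |) order-isomorphic to (L, ⪯) and a real number α > 0 such that the power LCM matrix with ij-entry lcm(x_i, x_j)^α is singular (has determinant 0). -/
/-!
By Möbius inversion, the meet matrix `[F (a ⊓ b)]` factors as `Z D Zᵀ`, where `D` is diagonal with
the Möbius transform `ψ_F a = ∑ b ≤ a, μ(b, a) F b` of `F` on its diagonal. Since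
`lcm (f a) (f b) = f a * f b / f (a ⊓ b)`, the power LCM matrix is singular as soon as
`ψ_F x = 0` for some `x`, where `F = f ^ (-α)`.

Choose `x` minimal among the elements covering at least two elements `y₁, y₂`. Every `b < x` other
than `⊥` then has a single lower cover `p`, so `ψ_F b = F b - F p ≤ 0` for antitone `F`, whence
`ψ_F x ≥ F x - F y₁ - F y₂ + F (y₁ ⊓ y₂)`. For `α = 1` this is positive because `f` at least doubles
along `<`. On the other hand `∑ b < x, μ(b, x) = -1`, so for a small exponent `t > 0` the part of
`ψ_F x` coming from `b < x` is below `-1/2`; multiplying `f` by a large new prime on the elements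
above `x` leaves that part alone and makes `f x ^ (-t) < 1/2`, so that `ψ_F x < 0`. The intermediate
value theorem gives the exponent.
-/

open Finset IncidenceAlgebra

theorem Iio_eq_Iic_of_covBy_of_subsingleton {L : Type*} [PartialOrder L] [LocallyFiniteOrderBot L]
    [IsStronglyCoatomic L] {a p : L} (hp : p ⋖ a) (ha : {y | y ⋖ a}.Subsingleton) :
    Iio a = Iic p := by
  ext c
  simp only [mem_Iio, mem_Iic]
  refine ⟨fun hca => ?_, fun hcp => hcp.trans_lt hp.lt⟩
  obtain ⟨q, hcq, hq⟩ := exists_le_covBy_of_lt hca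
  exact hcq.trans_eq (ha hq hp)

theorem Iic_inter_Iic_eq_Iic_inf {L : Type*} [SemilatticeInf L] [LocallyFiniteOrderBot L]
    [DecidableEq L] (a b : L) : Iic a ∩ Iic b = Iic (a ⊓ b) := by
  ext c
  simp

section MoebiusTransform

variable {L R : Type*} [PartialOrder L] [OrderBot L] [LocallyFiniteOrder L] [DecidableEq L] [Ring R]

/-- The Möbius transform `ψ_F` of a function `F` on a locally finite order with bottom element: the
function whose sums over the principal lower sets `Iic a` are the values `F a`. -/
def moebiusTransform (F : L → R) (a : L) : R :=
  ∑ b ∈ Iic a, mu R b a * F b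

theorem sum_Iic_moebiusTransform (F : L → R) (a : L) :
    ∑ b ∈ Iic a, moebiusTransform F b = F a := by
  calc ∑ b ∈ Iic a, ∑ c ∈ Iic b, mu R c b * F c
      = ∑ c ∈ Iic a, ∑ b ∈ Icc c a, mu R c b * F c :=
        sum_comm' fun b c => by
          simp only [mem_Iic, mem_Icc]
          exact ⟨fun h => ⟨⟨h.2, h.1⟩, h.2.trans h.1⟩, fun h => ⟨h.1.2, h.1.1⟩⟩
    _ = F a := by simp [← sum_mul, sum_Icc_mu_right]

theorem moebiusTransform_eq_sub_sum_Iio (F : L → R) (a : L) :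
    moebiusTransform F a = F a - ∑ b ∈ Iio a, moebiusTransform F b := by
  rw [← sum_Iic_moebiusTransform F a, ← add_sum_Iio_eq_sum_Iic, add_sub_cancel_right]

theorem moebiusTransform_eq_add_sum_Iio (F : L → R) (a : L) :
    moebiusTransform F a = F a + ∑ b ∈ Iio a, mu R b a * F b := by
  rw [moebiusTransform, ← add_sum_Iio_eq_sum_Iic, mu_self, one_mul]

theorem sum_Iio_mu_of_ne_bot {a : L} (ha : a ≠ ⊥) : ∑ b ∈ Iio a, mu R b a = -1 := by
  have hsum : ∑ b ∈ Iic a, mu R b a = 0 := by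
    rw [← Icc_bot, sum_Icc_mu_left, if_neg ha.symm]
  rw [← add_sum_Iio_eq_sum_Iic, mu_self] at hsum
  exact (neg_eq_of_add_eq_zero_right hsum).symm

theorem moebiusTransform_nonpos [PartialOrder R] [IsOrderedAddMonoid R] {F : L → R}
    (hF : Antitone F) {a : L} (ha : a ≠ ⊥) (hcov : {y | y ⋖ a}.Subsingleton) :
    moebiusTransform F a ≤ 0 := by
  obtain ⟨p, -, hp⟩ := exists_le_covBy_of_lt (bot_lt_iff_ne_bot.2 ha)
  rw [moebiusTransform_eq_sub_sum_Iio, Iio_eq_Iic_of_covBy_of_subsingleton hp hcov,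
    sum_Iic_moebiusTransform, sub_nonpos]
  exact hF hp.le

end MoebiusTransform

/-- The meet matrix `[F (a ⊓ b)]` of a function `F` on a meet semilattice. -/
def meetMatrix {L R : Type*} [SemilatticeInf L] (F : L → R) : Matrix L L R :=
  Matrix.of fun a b => F (a ⊓ b)

section Semilattice

variable {L R : Type*} [SemilatticeInf L] [OrderBot L] [LocallyFiniteOrder L] [DecidableEq L]

theorem sum_Iic_union_Iic_moebiusTransform [Ring R] (F : L → R) (a b : L) :
    ∑ c ∈ Iic a ∪ Iic b, moebiusTransform F c = F a + F b - F (a ⊓ b) := by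
  rw [eq_sub_iff_add_eq, ← sum_Iic_moebiusTransform F (a ⊓ b), ← Iic_inter_Iic_eq_Iic_inf,
    sum_union_inter, sum_Iic_moebiusTransform, sum_Iic_moebiusTransform]

theorem moebiusTransform_pos [Ring R] [PartialOrder R] [IsOrderedAddMonoid R] {F : L → R}
    (hF : Antitone F) {x y₁ y₂ : L} (hy₁ : y₁ < x) (hy₂ : y₂ < x)
    (hcov : ∀ b < x, {y | y ⋖ b}.Subsingleton) (hx : 0 < F x)
    (hadd : F y₁ + F y₂ ≤ F (y₁ ⊓ y₂)) : 0 < moebiusTransform F x := by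
  have hsub : Iic y₁ ∪ Iic y₂ ⊆ Iio x :=
    union_subset (fun c hc => mem_Iio.2 ((mem_Iic.1 hc).trans_lt hy₁))
      (fun c hc => mem_Iio.2 ((mem_Iic.1 hc).trans_lt hy₂))
  have hrest : ∀ b ∈ Iio x, b ∉ Iic y₁ ∪ Iic y₂ → moebiusTransform F b ≤ 0 := by
    intro b hb hb'
    refine moebiusTransform_nonpos hF ?_ (hcov b (mem_Iio.1 hb))
    rintro rfl
    simp at hb'
  have hle : ∑ b ∈ Iio x, moebiusTransform F b ≤ 0 :=
    calc ∑ b ∈ Iio x, moebiusTransform F b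
        ≤ ∑ b ∈ Iic y₁ ∪ Iic y₂, moebiusTransform F b := by
          rw [← sum_sdiff hsub]
          exact add_le_of_nonpos_left
            (sum_nonpos fun b hb => hrest b (mem_sdiff.1 hb).1 (mem_sdiff.1 hb).2)
      _ = F y₁ + F y₂ - F (y₁ ⊓ y₂) := sum_Iic_union_Iic_moebiusTransform F y₁ y₂
      _ ≤ 0 := sub_nonpos.2 hadd
  rw [moebiusTransform_eq_sub_sum_Iio]
  exact sub_pos.2 (hle.trans_lt hx)

theorem meetMatrix_eq_mul_diagonal_mul_transpose [Fintype L] [DecidableLE L] [CommRing R]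
    (F : L → R) :
    meetMatrix F =
      (Matrix.of fun a c => zeta R c a) * Matrix.diagonal (moebiusTransform F) *
        (Matrix.of fun a c => zeta R c a).transpose := by
  ext a b
  have hIic : Iic (a ⊓ b) = univ.filter fun c => c ≤ a ∧ c ≤ b := by
    ext c
    simp
  rw [Matrix.mul_apply, meetMatrix, Matrix.of_apply, ← sum_Iic_moebiusTransform F (a ⊓ b), hIic,
    sum_filter]
  refine sum_congr rfl fun c _ => ?_
  by_cases hca : c ≤ a <;> by_cases hcb : c ≤ b <;> simp [hca, hcb]

theorem det_meetMatrix_eq_zero [Fintype L] [CommRing R] {F : L → R} {x : L}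
    (hx : moebiusTransform F x = 0) : (meetMatrix F).det = 0 := by
  classical
  rw [meetMatrix_eq_mul_diagonal_mul_transpose, Matrix.det_mul, Matrix.det_mul,
    Matrix.det_diagonal, prod_eq_zero (mem_univ x) hx, mul_zero, zero_mul]

end Semilattice

theorem gcd_prod_prod_of_pairwise_coprime {ι : Type*} [DecidableEq ι] {q : ι → ℕ}
    (hq : Pairwise fun i j => Nat.Coprime (q i) (q j)) (s t : Finset ι) :
    Nat.gcd (∏ i ∈ s, q i) (∏ i ∈ t, q i) = ∏ i ∈ s ∩ t, q i := by
  have hcop : Nat.Coprime (∏ i ∈ s \ t, q i) (∏ j ∈ t \ s, q j) :=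
    Nat.Coprime.prod_left fun i hi => Nat.Coprime.prod_right fun j hj =>
      hq fun hij => (mem_sdiff.1 hj).2 (hij ▸ (mem_sdiff.1 hi).1)
  rw [← prod_inter_mul_prod_sdiff s t q, ← prod_inter_mul_prod_sdiff t s q, inter_comm t s,
    Nat.gcd_mul_left, hcop.gcd_eq_one, mul_one]

theorem continuous_sum_mul_rpow_neg {ι : Type*} (s : Finset ι) (c : ι → ℝ) {u : ι → ℝ}
    (hu : ∀ i, u i ≠ 0) : Continuous fun t : ℝ => ∑ i ∈ s, c i * u i ^ (-t) :=
  continuous_finsetSum s fun i _ =>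
    continuous_const.mul (continuous_const.rpow continuous_neg fun _ => Or.inl (hu i))

/-- An embedding of a meet semilattice into the positive integers that takes meets to greatest
common divisors; its range is a GCD closed set whose divisibility order is that of `L`. -/
structure IsGCDEmbedding {L : Type*} [SemilatticeInf L] (f : L → ℕ) : Prop where
  pos : ∀ a, 0 < f a
  injective : Function.Injective f
  map_inf : ∀ a b, f (a ⊓ b) = Nat.gcd (f a) (f b)

namespace IsGCDEmbedding

variable {L : Type*} [SemilatticeInf L] {f : L → ℕ}

theorem dvd_iff_le (hf : IsGCDEmbedding f) {a b : L} : f a ∣ f b ↔ a ≤ b := by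
  rw [← Nat.gcd_eq_left_iff_dvd, ← hf.map_inf, hf.injective.eq_iff, inf_eq_left]

theorem monotone (hf : IsGCDEmbedding f) : Monotone f := fun _ b hab =>
  Nat.le_of_dvd (hf.pos b) (hf.dvd_iff_le.2 hab)

theorem two_mul_le_of_lt (hf : IsGCDEmbedding f) {a b : L} (hab : a < b) : 2 * f a ≤ f b := by
  obtain ⟨k, hk⟩ := hf.dvd_iff_le.2 hab.le
  have hk_zero : k ≠ 0 := by
    rintro rfl
    exact (hf.pos b).ne' hk
  have hk_one : k ≠ 1 := by
    rintro rfl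
    exact hab.ne' (hf.injective (hk.trans (mul_one _)))
  rw [hk, mul_comm]
  exact Nat.mul_le_mul_left _ (by omega)

theorem inv_add_inv_le_inv_inf (hf : IsGCDEmbedding f) {a b : L} (hab : ¬a ≤ b) (hba : ¬b ≤ a) :
    (f a : ℝ)⁻¹ + (f b : ℝ)⁻¹ ≤ (f (a ⊓ b) : ℝ)⁻¹ := by
  have hinv : ∀ c, a ⊓ b < c → (f c : ℝ)⁻¹ ≤ (f (a ⊓ b) : ℝ)⁻¹ / 2 := by
    intro c hc
    have hpos : (0 : ℝ) < f (a ⊓ b) := Nat.cast_pos.2 (hf.pos _)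
    have hdouble : (2 : ℝ) * f (a ⊓ b) ≤ f c := mod_cast hf.two_mul_le_of_lt hc
    calc (f c : ℝ)⁻¹ ≤ (2 * (f (a ⊓ b) : ℝ))⁻¹ := inv_anti₀ (by positivity) hdouble
      _ = (f (a ⊓ b) : ℝ)⁻¹ / 2 := by rw [mul_inv, mul_comm, div_eq_mul_inv]
  linarith [hinv a (inf_lt_left.2 hab), hinv b (inf_lt_right.2 hba)]

theorem prod_Iic_prime [LocallyFiniteOrderBot L] {p : L → ℕ} (hp : ∀ c, (p c).Prime)
    (hinj : Function.Injective p) : IsGCDEmbedding fun a => ∏ c ∈ Iic a, p c where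
  pos a := prod_pos fun c _ => (hp c).pos
  injective := by
    have le_of_prod_eq : ∀ a b : L, ∏ c ∈ Iic a, p c = ∏ c ∈ Iic b, p c → a ≤ b := by
      intro a b hab
      have hdvd : p a ∣ ∏ c ∈ Iic b, p c := hab ▸ dvd_prod_of_mem p (mem_Iic.2 le_rfl)
      obtain ⟨c, hc, hac⟩ := (hp a).prime.exists_mem_finset_dvd hdvd
      exact hinj ((Nat.prime_dvd_prime_iff_eq (hp a) (hp c)).1 hac) ▸ mem_Iic.1 hc
    exact fun a b hab => le_antisymm (le_of_prod_eq a b hab) (le_of_prod_eq b a hab.symm)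
  map_inf a b := by
    classical
    have hcop : Pairwise fun c d => Nat.Coprime (p c) (p d) := fun c d hcd =>
      (Nat.coprime_primes (hp c) (hp d)).2 (hinj.ne hcd)
    rw [gcd_prod_prod_of_pairwise_coprime hcop, Iic_inter_Iic_eq_Iic_inf]

theorem exists_of_countable (L : Type*) [SemilatticeInf L] [LocallyFiniteOrderBot L]
    [Countable L] : ∃ f : L → ℕ, IsGCDEmbedding f := by
  obtain ⟨e, he⟩ := exists_injective_nat L
  exact ⟨_, prod_Iic_prime (p := fun c => Nat.nth Nat.Prime (e c))
    (fun c => Nat.prime_nth_prime _) ((Nat.nth_injective Nat.infinite_setOfPred_prime).comp he)⟩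

theorem mul_ite_le [DecidableLE L] (hf : IsGCDEmbedding f) (x : L) {m : ℕ} (hm : 0 < m)
    (hcop : ∀ a, Nat.Coprime m (f a)) : IsGCDEmbedding fun a => f a * if x ≤ a then m else 1 where
  pos a := by
    have := hf.pos a
    positivity
  injective := by
    have le_of_dvd : ∀ a b, (f a * if x ≤ a then m else 1) ∣ (f b * if x ≤ b then m else 1) →
        a ≤ b := by
      intro a b hab
      have hdvd : f a ∣ f b * m := (dvd_of_mul_right_dvd hab).trans
        (mul_dvd_mul_left _ (by split_ifs <;> simp))
      exact hf.dvd_iff_le.1 ((hcop a).symm.dvd_of_dvd_mul_right hdvd)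
    exact fun a b hab => le_antisymm (le_of_dvd a b hab.dvd) (le_of_dvd b a hab.symm.dvd)
  map_inf a b := by
    by_cases ha : x ≤ a <;> by_cases hb : x ≤ b <;>
      simp [ha, hb, hf.map_inf, Nat.gcd_mul_right, (hcop _).gcd_mul_right_cancel,
        (hcop _).gcd_mul_right_cancel_right]

theorem exists_eq_of_lt_and_le [Finite L] (hf : IsGCDEmbedding f) (x : L) (N : ℕ) :
    ∃ g : L → ℕ, IsGCDEmbedding g ∧ (∀ b < x, g b = f b) ∧ N ≤ g x := by
  classical
  obtain ⟨M, hM⟩ := (Set.finite_range f).bddAbove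
  obtain ⟨P, hP, hprime⟩ := Nat.exists_infinite_primes (M + N + 1)
  have hcop : ∀ a, Nat.Coprime P (f a) := fun a => by
    have hfM : f a ≤ M := hM ⟨a, rfl⟩
    exact Nat.coprime_of_lt_prime (hf.pos a).ne' (by omega) hprime
  refine ⟨_, hf.mul_ite_le x hprime.pos hcop, fun b hb => by simp [hb.not_ge], ?_⟩
  calc N ≤ P := by omega
    _ ≤ f x * P := Nat.le_mul_of_pos_left P (hf.pos x)
    _ = f x * if x ≤ x then P else 1 := by rw [if_pos le_rfl]

theorem lcm_rpow (hf : IsGCDEmbedding f) (a b : L) (α : ℝ) :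
    (Nat.lcm (f a) (f b) : ℝ) ^ α =
      (f a : ℝ) ^ α * ((f b : ℝ) ^ α * (f (a ⊓ b) : ℝ) ^ (-α)) := by
  have hpos : (0 : ℝ) < f (a ⊓ b) := Nat.cast_pos.2 (hf.pos _)
  have hmul : (Nat.lcm (f a) (f b) : ℝ) * f (a ⊓ b) = f a * f b := by
    rw [hf.map_inf]
    exact_mod_cast Nat.lcm_mul_gcd (f a) (f b)
  rw [← mul_assoc, ← Real.mul_rpow (Nat.cast_nonneg _) (Nat.cast_nonneg _), ← hmul,
    Real.mul_rpow (Nat.cast_nonneg _) hpos.le, mul_assoc, ← Real.rpow_add hpos, add_neg_cancel,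
    Real.rpow_zero, mul_one]

variable [OrderBot L] [LocallyFiniteOrder L] [DecidableEq L]

theorem det_lcm_rpow_eq_zero [Fintype L] (hf : IsGCDEmbedding f) {α : ℝ} {x : L}
    (hx : moebiusTransform (fun a => (f a : ℝ) ^ (-α)) x = 0) :
    (Matrix.of fun a b => (Nat.lcm (f a) (f b) : ℝ) ^ α).det = 0 := by
  simp_rw [hf.lcm_rpow]
  have hrow := Matrix.det_mul_row (fun b => (f b : ℝ) ^ α)
    (meetMatrix fun a => (f a : ℝ) ^ (-α))
  rw [det_meetMatrix_eq_zero hx, mul_zero] at hrow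
  exact (Matrix.det_mul_column (fun a => (f a : ℝ) ^ α) _).trans (mul_eq_zero_of_right _ hrow)

theorem moebiusTransform_rpow_neg_one_pos (hf : IsGCDEmbedding f) {x y₁ y₂ : L} (hne : y₁ ≠ y₂)
    (hy₁ : y₁ ⋖ x) (hy₂ : y₂ ⋖ x) (hcov : ∀ b < x, {y | y ⋖ b}.Subsingleton) :
    0 < moebiusTransform (fun a => (f a : ℝ) ^ (-1 : ℝ)) x := by
  have hpos : ∀ a, (0 : ℝ) < f a := fun a => Nat.cast_pos.2 (hf.pos a)
  simp_rw [Real.rpow_neg_one]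
  exact moebiusTransform_pos (fun a b hab => inv_anti₀ (hpos a) (mod_cast hf.monotone hab))
    hy₁.lt hy₂.lt hcov (inv_pos.2 (hpos x))
    (hf.inv_add_inv_le_inv_inf (fun h => hy₁.2 (h.lt_of_ne hne) hy₂.lt)
      fun h => hy₂.2 (h.lt_of_ne hne.symm) hy₁.lt)

theorem exists_sum_Iio_mu_mul_rpow_neg_lt (hf : IsGCDEmbedding f) {x : L} (hx : x ≠ ⊥) :
    ∃ t : ℝ, 0 < t ∧ ∑ b ∈ Iio x, mu ℝ b x * (f b : ℝ) ^ (-t) < -1 / 2 := by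
  have hcont : Continuous fun t : ℝ => ∑ b ∈ Iio x, mu ℝ b x * (f b : ℝ) ^ (-t) :=
    continuous_sum_mul_rpow_neg _ _ fun b => Nat.cast_ne_zero.2 (hf.pos b).ne'
  have hzero : ∑ b ∈ Iio x, mu ℝ b x * (f b : ℝ) ^ (-0 : ℝ) < -1 / 2 := by
    simp only [neg_zero, Real.rpow_zero, mul_one, sum_Iio_mu_of_ne_bot hx]
    norm_num
  have hnear : ∀ᶠ t in nhdsWithin (0 : ℝ) (Set.Ioi 0),
      ∑ b ∈ Iio x, mu ℝ b x * (f b : ℝ) ^ (-t) < -1 / 2 :=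
    nhdsWithin_le_nhds (hcont.continuousAt.eventually_lt_const hzero)
  exact (eventually_mem_nhdsWithin.and hnear).exists

theorem exists_moebiusTransform_rpow_neg_neg [Finite L] {x : L} (hx : x ≠ ⊥) :
    ∃ g : L → ℕ, IsGCDEmbedding g ∧
      ∃ t : ℝ, 0 < t ∧ moebiusTransform (fun a => (g a : ℝ) ^ (-t)) x < 0 := by
  obtain ⟨f, hf⟩ := exists_of_countable L
  obtain ⟨t, ht, hsum⟩ := hf.exists_sum_Iio_mu_mul_rpow_neg_lt hx
  have hlarge : ∀ᶠ N : ℕ in Filter.atTop, (N : ℝ) ^ (-t) < 1 / 2 :=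
    ((tendsto_rpow_neg_atTop ht).comp tendsto_natCast_atTop_atTop).eventually_lt_const (by norm_num)
  obtain ⟨N, hN⟩ := hlarge.exists_forall_of_atTop
  obtain ⟨g, hg, hgf, hgx⟩ := hf.exists_eq_of_lt_and_le x N
  have hsame : ∑ b ∈ Iio x, mu ℝ b x * (g b : ℝ) ^ (-t) =
      ∑ b ∈ Iio x, mu ℝ b x * (f b : ℝ) ^ (-t) :=
    sum_congr rfl fun b hb => by rw [hgf b (mem_Iio.1 hb)]
  refine ⟨g, hg, t, ht, ?_⟩
  rw [moebiusTransform_eq_add_sum_Iio, hsame]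
  linarith [hN (g x) hgx]

theorem exists_moebiusTransform_rpow_neg_eq_zero [Finite L] {x y₁ y₂ : L} (hne : y₁ ≠ y₂)
    (hy₁ : y₁ ⋖ x) (hy₂ : y₂ ⋖ x) (hcov : ∀ b < x, {y | y ⋖ b}.Subsingleton) :
    ∃ f : L → ℕ, IsGCDEmbedding f ∧
      ∃ α : ℝ, 0 < α ∧ moebiusTransform (fun a => (f a : ℝ) ^ (-α)) x = 0 := by
  obtain ⟨f, hf, t, ht, hneg⟩ := exists_moebiusTransform_rpow_neg_neg hy₁.lt.ne_bot
  have hpos := hf.moebiusTransform_rpow_neg_one_pos hne hy₁ hy₂ hcov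
  have hcont : Continuous fun t : ℝ => moebiusTransform (fun a => (f a : ℝ) ^ (-t)) x :=
    continuous_sum_mul_rpow_neg _ _ fun b => Nat.cast_ne_zero.2 (hf.pos b).ne'
  obtain ⟨α, hα, hzero⟩ :=
    intermediate_value_uIcc hcont.continuousOn (Set.mem_uIcc_of_le hneg.le hpos.le)
  exact ⟨f, hf, α, (lt_min ht one_pos).trans_le hα.1, hzero⟩

end IsGCDEmbedding

theorem exists_nontrivial_covBy_and_forall_lt_subsingleton {L : Type*} [Preorder L]
    [WellFoundedLT L] {x : L} (hx : {y | y ⋖ x}.Nontrivial) :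
    ∃ z : L, {y | y ⋖ z}.Nontrivial ∧ ∀ b < z, {y | y ⋖ b}.Subsingleton := by
  obtain ⟨z, hz, hmin⟩ := wellFounded_lt.has_min {x : L | {y | y ⋖ x}.Nontrivial} ⟨x, hx⟩
  exact ⟨z, hz, fun b hb => Set.not_nontrivial_iff.1 fun hb' => hmin b hb' hb⟩

/-- Let `L` be a finite meet semilattice in which some element covers at least two
elements.  Then there is a GCD closed set of positive integers, order-isomorphic to `L`
under divisibility, and a real `α > 0` such that its power LCM matrix
`[lcm (f a) (f b) ^ α]` is singular. -/
theorem stmt_16 {L : Type*} [SemilatticeInf L] [Fintype L] [DecidableEq L]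
    (x y₁ y₂ : L) (hne : y₁ ≠ y₂) (hcov₁ : y₁ ⋖ x) (hcov₂ : y₂ ⋖ x) :
    ∃ (f : L → ℕ) (α : ℝ),
      (∀ a, 0 < f a) ∧ Function.Injective f ∧
      (∀ a b, a ≤ b ↔ f a ∣ f b) ∧
      (∀ a b, ∃ c, f c = Nat.gcd (f a) (f b)) ∧
      0 < α ∧
      (Matrix.of fun a b => (Nat.lcm (f a) (f b) : ℝ) ^ α).det = 0 := by
  classical
  have : Nonempty L := ⟨x⟩
  let : OrderBot L := Fintype.toOrderBot L
  let : LocallyFiniteOrder L := Fintype.toLocallyFiniteOrder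
  obtain ⟨z, ⟨z₁, hz₁, z₂, hz₂, hz⟩, hmin⟩ :=
    exists_nontrivial_covBy_and_forall_lt_subsingleton ⟨y₁, hcov₁, y₂, hcov₂, hne⟩
  obtain ⟨f, hf, α, hα, hzero⟩ :=
    IsGCDEmbedding.exists_moebiusTransform_rpow_neg_eq_zero hz hz₁ hz₂ hmin
  exact ⟨f, α, hf.pos, hf.injective, fun a b => hf.dvd_iff_le.symm,
    fun a b => ⟨a ⊓ b, hf.map_inf a b⟩, hα, hf.det_lcm_rpow_eq_zero hzero⟩
end

section
/- Let x_1, …, x_n be distinct positive integers such that x_i divides x_n for all i = 1, …, n, and let α be a real number. If the n×n matrix with ij-entry lcm(x_i, x_j)^α has determinant 0, then the n×n matrix with ij-entry lcm(x_n/x_i, x_n/x_j)^α also has determinant 0. -/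
/-!
If `a` and `b` divide `N`, then `a * b * lcm (N / a) (N / b) = N * lcm a b`. Applying a totally
multiplicative function `f` entrywise, the LCM matrix of the quotients `N / x i`, multiplied on
both sides by the diagonal matrix of the `f (x i)`, becomes `f N` times the LCM matrix of the
`x i`. When `f N ≠ 0` these diagonal factors are nonsingular, because `f (x i)` divides `f N`.
-/

theorem mul_mul_lcm_div_div {N a b : ℕ} (ha : a ∣ N) (hb : b ∣ N) :
    a * b * Nat.lcm (N / a) (N / b) = N * Nat.lcm a b := by
  have left_entry : a * b * (N / a) = N * b := by
    rw [mul_right_comm, Nat.mul_div_cancel' ha]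
  have right_entry : a * b * (N / b) = N * a := by
    rw [mul_assoc, Nat.mul_div_cancel' hb, mul_comm]
  rw [← Nat.lcm_mul_left, left_entry, right_entry, Nat.lcm_mul_left, Nat.lcm_comm]

/-- The totally multiplicative function `n ↦ n ^ α` for a real exponent `α`. At `α = 0` it
sends `0` to `1`, so it is bundled without preservation of zero. -/
noncomputable def natRpowHom (α : ℝ) : ℕ →* ℝ where
  toFun n := (n : ℝ) ^ α
  map_one' := by rw [Nat.cast_one, Real.one_rpow]
  map_mul' m n := by rw [Nat.cast_mul, Real.mul_rpow m.cast_nonneg n.cast_nonneg]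

theorem natRpowHom_ne_zero {n : ℕ} (hn : 0 < n) (α : ℝ) : natRpowHom α n ≠ 0 :=
  ne_of_gt (Real.rpow_pos_of_pos (Nat.cast_pos.2 hn) α)

/-- The LCM matrix on the family `x` with respect to the totally multiplicative function `f`; the
power LCM matrix is the case `f = natRpowHom α`. -/
def lcmMatrix {ι R : Type*} [Monoid R] (f : ℕ →* R) (x : ι → ℕ) : Matrix ι ι R :=
  Matrix.of fun i j => f (Nat.lcm (x i) (x j))

section LcmMatrix

variable {ι R : Type*} [Fintype ι] [DecidableEq ι] [CommRing R] (f : ℕ →* R) {x : ι → ℕ} {N : ℕ}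

theorem diagonal_mul_lcmMatrix_div_mul_diagonal (hdvd : ∀ i, x i ∣ N) :
    Matrix.diagonal (fun i => f (x i)) * lcmMatrix f (fun i => N / x i) *
      Matrix.diagonal (fun i => f (x i)) = f N • lcmMatrix f x := by
  ext i j
  calc (Matrix.diagonal (fun i => f (x i)) * lcmMatrix f (fun i => N / x i) *
        Matrix.diagonal (fun i => f (x i))) i j
      = f (x i) * f (Nat.lcm (N / x i) (N / x j)) * f (x j) := by
        rw [Matrix.mul_diagonal, Matrix.diagonal_mul, lcmMatrix, Matrix.of_apply]
    _ = f (x i * x j * Nat.lcm (N / x i) (N / x j)) := by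
        rw [map_mul, map_mul, mul_right_comm]
    _ = f N * f (Nat.lcm (x i) (x j)) := by
        rw [mul_mul_lcm_div_div (hdvd i) (hdvd j), map_mul]

theorem sq_prod_mul_det_lcmMatrix_div (hdvd : ∀ i, x i ∣ N) :
    (∏ i, f (x i)) ^ 2 * (lcmMatrix f fun i => N / x i).det =
      f N ^ Fintype.card ι * (lcmMatrix f x).det := by
  have hdet := congrArg Matrix.det (diagonal_mul_lcmMatrix_div_mul_diagonal f hdvd)
  rw [Matrix.det_mul, Matrix.det_mul, Matrix.det_diagonal, Matrix.det_smul] at hdet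
  rw [← hdet, sq, mul_right_comm]

theorem stmt_18_general [IsDomain R] (hN : f N ≠ 0) (hdvd : ∀ i, x i ∣ N) :
    (lcmMatrix f fun i => N / x i).det = 0 ↔ (lcmMatrix f x).det = 0 := by
  have hx (i : ι) : f (x i) ≠ 0 := ne_zero_of_dvd_ne_zero hN (map_dvd f (hdvd i))
  have hprod : (∏ i, f (x i)) ^ 2 ≠ 0 := pow_ne_zero 2 (Finset.prod_ne_zero_iff.2 fun i _ => hx i)
  rw [← mul_eq_zero_iff_left hprod, sq_prod_mul_det_lcmMatrix_div f hdvd,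
    mul_eq_zero_iff_left (pow_ne_zero _ hN)]

end LcmMatrix

/-- If `x 0, …, x (n-1)` are distinct positive integers all dividing the last one
`x (n-1)`, and the power LCM matrix `[lcm (x i) (x j) ^ α]` is singular, then so is the
matrix `[lcm (x (n-1) / x i) (x (n-1) / x j) ^ α]`. -/
theorem stmt_18 (n : ℕ) (hn : 0 < n) (x : Fin n → ℕ) (hpos : ∀ i, 0 < x i)
    (hinj : Function.Injective x)
    (hdvd : ∀ i, x i ∣ x ⟨n - 1, by omega⟩) (α : ℝ)
    (hdet : (Matrix.of fun i j => (Nat.lcm (x i) (x j) : ℝ) ^ α).det = 0) :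
    (Matrix.of fun i j =>
      (Nat.lcm (x ⟨n - 1, by omega⟩ / x i) (x ⟨n - 1, by omega⟩ / x j) : ℝ) ^ α).det = 0 :=
  (stmt_18_general (natRpowHom α) (natRpowHom_ne_zero (hpos _) α) hdvd).2 hdet
end

section
/- Let q be an odd positive integer with q > 1 and gcd(q, 1020180525) = 1, and let S = {1, 3, 5, 7, 195, 291, 1407, 4025q, 1020180525q}. Then S is a GCD closed set of odd positive integers, and there exists a real number α_0 > 1 such that the 9×9 power LCM matrix with ij-entry lcm(x_i, x_j)^{α_0} is singular (has determinant 0). -/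
/-- The set `{1, 3, 5, 7, 195, 291, 1407, 4025·q, 1020180525·q}` for an odd `q > 1`
coprime to `1020180525`. -/
def hongSetQ (q : ℕ) : Fin 9 → ℕ :=
  ![1, 3, 5, 7, 195, 291, 1407, 4025 * q, 1020180525 * q]

/-!
Since `lcm(x, y)^α = x^α * y^α * gcd(x, y)^(-α)`, the power LCM matrix is singular exactly when
the matrix of the values `gcd(xᵢ, xⱼ)^(-α)` is. Let `t` be the largest element of `S`, a common
multiple of all the others, and let `μ` be the Möbius function of `S` ordered by divisibility. By
Weisner's theorem the coefficients `μ(x, t)` annihilate every row of that matrix other than the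
row of `t`, so they lie in its kernel as soon as `F(α) = ∑ μ(x, t) x^(-α)` vanishes. The set is
chosen so that `F(1) = 0` for `q = 1`; for `q > 1` this makes `F(1)` slightly positive, whereas
`F(2) < 0`, and the intermediate value theorem gives a zero `α₀ > 1`.
-/

open Finset

section GcdClosed

variable {ι R : Type*} [Fintype ι] {x : ι → ℕ} {i : ι}

/-- Weisner's theorem. The values of `d` are treated in decreasing order: the sum over all `k` with
`d ∣ gcd (x i) (x k)` vanishes by hypothesis, and so do its parts over proper multiples of `d` by
induction. -/
theorem sum_filter_gcd_eq_zero [AddCommMonoid R] {c : ι → R}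
    (hclosed : ∀ i j, ∃ k, x k = Nat.gcd (x i) (x j)) (hi : 0 < x i)
    (hc : ∀ j, x j ∣ x i → ∑ k with x j ∣ x k, c k = 0) (d : ℕ) :
    ∑ k with Nat.gcd (x i) (x k) = d, c k = 0 := by
  induction hn : x i - d using Nat.strong_induction_on generalizing d with
  | _ n ih =>
  subst hn
  rcases (univ.filter fun k => Nat.gcd (x i) (x k) = d).eq_empty_or_nonempty with h | ⟨l, hl⟩
  · rw [h, sum_empty]
  obtain ⟨j, hj⟩ := hclosed i l
  obtain rfl : x j = d := hj.trans (mem_filter.1 hl).2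
  have hji : x j ∣ x i := hj ▸ Nat.gcd_dvd_left _ _
  have fiber_eq_zero : ∀ e ∈ (x i).divisors, e ≠ x j →
      ∑ k with x j ∣ x k ∧ Nat.gcd (x i) (x k) = e, c k = 0 := by
    intro e he hne
    have hei : e ∣ x i := Nat.dvd_of_mem_divisors he
    by_cases hje : x j ∣ e
    · have hlt : x j < e := (Nat.le_of_dvd (Nat.pos_of_mem_divisors he) hje).lt_of_ne' hne
      rw [← ih _ (by have := Nat.le_of_dvd hi hei; omega) e rfl]
      congr 1 with k
      simp only [mem_filter_univ, and_iff_right_iff_imp]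
      rintro rfl
      exact hje.trans (Nat.gcd_dvd_right _ _)
    · rw [filter_false_of_mem, sum_empty]
      rintro k - ⟨hjk, rfl⟩
      exact hje (Nat.dvd_gcd hji hjk)
  calc ∑ k with Nat.gcd (x i) (x k) = x j, c k
      = ∑ k with x j ∣ x k ∧ Nat.gcd (x i) (x k) = x j, c k := by
        congr 1 with k
        simp only [mem_filter_univ, iff_and_self]
        exact fun h => h ▸ Nat.gcd_dvd_right _ _
    _ = ∑ e ∈ (x i).divisors, ∑ k with x j ∣ x k ∧ Nat.gcd (x i) (x k) = e, c k :=
        (sum_eq_single_of_mem _ (Nat.mem_divisors.2 ⟨hji, hi.ne'⟩) fiber_eq_zero).symm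
    _ = ∑ k with x j ∣ x k, c k := by
        simp only [← filter_filter]
        exact sum_fiberwise_of_maps_to
          (fun k _ => Nat.mem_divisors.2 ⟨Nat.gcd_dvd_left _ _, hi.ne'⟩) c
    _ = 0 := hc j hji

theorem sum_mul_gcd_eq_zero [NonUnitalNonAssocSemiring R] {c : ι → R}
    (hclosed : ∀ i j, ∃ k, x k = Nat.gcd (x i) (x j)) (hi : 0 < x i)
    (hc : ∀ j, x j ∣ x i → ∑ k with x j ∣ x k, c k = 0) (f : ℕ → R) :
    ∑ k, c k * f (Nat.gcd (x i) (x k)) = 0 := by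
  rw [← sum_fiberwise_of_maps_to
    (fun k _ => Nat.mem_divisors.2 ⟨Nat.gcd_dvd_left (x i) (x k), hi.ne'⟩)]
  refine sum_eq_zero fun d _ => ?_
  calc ∑ k with Nat.gcd (x i) (x k) = d, c k * f (Nat.gcd (x i) (x k))
      = ∑ k with Nat.gcd (x i) (x k) = d, c k * f d :=
        sum_congr rfl fun k hk => by rw [(mem_filter.1 hk).2]
    _ = 0 := by rw [← sum_mul, sum_filter_gcd_eq_zero hclosed hi hc, zero_mul]

variable [DecidableEq ι]

theorem det_gcd_eq_zero [CommRing R] [IsDomain R] {c : ι → R} {t : ι}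
    (hclosed : ∀ i j, ∃ k, x k = Nat.gcd (x i) (x j)) (hpos : ∀ i, 0 < x i)
    (htop : ∀ i, x i ∣ x t) (hc : ∀ j, x j ≠ x t → ∑ k with x j ∣ x k, c k = 0) (hc0 : c ≠ 0)
    {f : ℕ → R} (hf : ∑ k, c k * f (x k) = 0) :
    (Matrix.of fun i j => f (Nat.gcd (x i) (x j))).det = 0 := by
  refine Matrix.exists_mulVec_eq_zero_iff.1 ⟨c, hc0, funext fun i => ?_⟩
  simp only [Matrix.mulVec, dotProduct, Matrix.of_apply, Pi.zero_apply, mul_comm _ (c _)]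
  by_cases hit : x i = x t
  · simpa only [hit, Nat.gcd_eq_right (htop _)] using hf
  · refine sum_mul_gcd_eq_zero hclosed (hpos i) (fun j hji => hc j fun hjt => hit ?_) f
    exact Nat.dvd_antisymm (htop i) (hjt ▸ hji)

theorem lcm_rpow_eq_mul_gcd_rpow_neg {a b : ℕ} (ha : 0 < a) (α : ℝ) :
    (Nat.lcm a b : ℝ) ^ α = (b : ℝ) ^ α * ((a : ℝ) ^ α * (Nat.gcd a b : ℝ) ^ (-α)) := by
  have hgcd : (0 : ℝ) < Nat.gcd a b := mod_cast Nat.gcd_pos_of_pos_left b ha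
  have hmul : (Nat.gcd a b : ℝ) ^ α * (Nat.lcm a b : ℝ) ^ α = (a : ℝ) ^ α * (b : ℝ) ^ α := by
    rw [← Real.mul_rpow (by positivity) (by positivity),
      ← Real.mul_rpow (by positivity) (by positivity)]
    exact_mod_cast congrArg (fun n : ℕ => (n : ℝ) ^ α) (Nat.gcd_mul_lcm a b)
  have hne : (Nat.gcd a b : ℝ) ^ α ≠ 0 := (Real.rpow_pos_of_pos hgcd α).ne'
  rw [Real.rpow_neg hgcd.le]
  field_simp
  linear_combination hmul

theorem det_lcm_rpow (hpos : ∀ i, 0 < x i) (α : ℝ) :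
    (Matrix.of fun i j => (Nat.lcm (x i) (x j) : ℝ) ^ α).det =
      (∏ i, (x i : ℝ) ^ α) * ((∏ i, (x i : ℝ) ^ α) *
        (Matrix.of fun i j => (Nat.gcd (x i) (x j) : ℝ) ^ (-α)).det) := by
  rw [← Matrix.det_mul_column, ← Matrix.det_mul_row]
  simp only [Matrix.of_apply, lcm_rpow_eq_mul_gcd_rpow_neg (hpos _)]

end GcdClosed

section CoprimePowers

variable {q a b : ℕ}

theorem mul_pow_dvd_mul_pow_iff (hq : 1 < q) (ha : a.Coprime q) (hb : b.Coprime q) (m n : ℕ) :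
    a * q ^ m ∣ b * q ^ n ↔ a ∣ b ∧ m ≤ n := by
  have mul_pow_dvd_iff : a * q ^ m ∣ b * q ^ n ↔ a ∣ b * q ^ n ∧ q ^ m ∣ b * q ^ n :=
    ⟨fun h => ⟨dvd_of_mul_right_dvd h, dvd_of_mul_left_dvd h⟩,
      fun h => (ha.pow_right m).mul_dvd_of_dvd_of_dvd h.1 h.2⟩
  rw [mul_pow_dvd_iff, (ha.pow_right n).dvd_mul_right, (hb.symm.pow_left m).dvd_mul_left,
    Nat.pow_dvd_pow_iff_le_right hq]

theorem gcd_mul_pow_mul_pow (ha : a.Coprime q) (hb : b.Coprime q) (m n : ℕ) :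
    Nat.gcd (a * q ^ m) (b * q ^ n) = Nat.gcd a b * q ^ min m n := by
  have gcd_pow_pow : Nat.gcd (q ^ m) (q ^ n) = q ^ min m n := by
    rcases le_total m n with h | h
    · rw [min_eq_left h, Nat.gcd_eq_left (pow_dvd_pow q h)]
    · rw [min_eq_right h, Nat.gcd_eq_right (pow_dvd_pow q h)]
  rw [(hb.pow_right n).gcd_mul, (hb.symm.pow_left m).gcd_mul_right_cancel,
    (ha.pow_right n).gcd_mul_left_cancel, gcd_pow_pow]

end CoprimePowers

/-- The exponent of `q` in the members of `hongSetQ q`, whose remaining factors are the members of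
`hongSetQ 1`. -/
def hongExponent : Fin 9 → ℕ := ![0, 0, 0, 0, 0, 0, 0, 1, 1]

/-- The values `μ(x, t)` of the Möbius function of `hongSetQ q`, ordered by divisibility, where
`t = 1020180525 * q` is the largest element. They do not depend on `q`. -/
def hongMoebius : Fin 9 → ℤ := ![-1, 2, 1, 1, -1, -1, -1, -1, 1]

/-- The sum `∑ μ(x, t) x^(-α)` over `x` in `hongSetQ q`, whose zeros are exponents of singular
power LCM matrices. -/
noncomputable def hongDirichletSum (q : ℕ) (α : ℝ) : ℝ :=
  ∑ k, (hongMoebius k : ℝ) * (hongSetQ q k : ℝ) ^ (-α)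

section HongSet

variable {q : ℕ}

theorem hongSetQ_eq_mul_pow (q : ℕ) (i : Fin 9) :
    hongSetQ q i = hongSetQ 1 i * q ^ hongExponent i := by
  fin_cases i <;> simp [hongSetQ, hongExponent]

theorem hongSetQ_dvd_last (q : ℕ) (i : Fin 9) : hongSetQ q i ∣ hongSetQ q 8 := by
  rw [hongSetQ_eq_mul_pow q i, hongSetQ_eq_mul_pow q 8]
  have base_dvd : ∀ i, hongSetQ 1 i ∣ hongSetQ 1 8 := by decide +kernel
  have exponent_le : ∀ i, hongExponent i ≤ hongExponent 8 := by decide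
  exact mul_dvd_mul (base_dvd i) (pow_dvd_pow q (exponent_le i))

theorem odd_hongSetQ (hodd : Odd q) (i : Fin 9) : Odd (hongSetQ q i) := by
  have odd_last : Odd (1020180525 * q) := Odd.mul (by decide) hodd
  exact odd_last.of_dvd_nat (hongSetQ_dvd_last q i)

theorem hongSetQ_pos (hq : 0 < q) (i : Fin 9) : 0 < hongSetQ q i := by
  have last_pos : 0 < 1020180525 * q := by positivity
  exact Nat.pos_of_dvd_of_pos (hongSetQ_dvd_last q i) last_pos

theorem coprime_hongSetQ_one (hcop : Nat.gcd q 1020180525 = 1) (i : Fin 9) :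
    (hongSetQ 1 i).Coprime q :=
  (Nat.Coprime.coprime_dvd_right (hongSetQ_dvd_last 1 i) hcop).symm

theorem hongSetQ_dvd_iff (hq : 1 < q) (hcop : Nat.gcd q 1020180525 = 1) (i j : Fin 9) :
    hongSetQ q i ∣ hongSetQ q j ↔
      hongSetQ 1 i ∣ hongSetQ 1 j ∧ hongExponent i ≤ hongExponent j := by
  rw [hongSetQ_eq_mul_pow q i, hongSetQ_eq_mul_pow q j]
  exact mul_pow_dvd_mul_pow_iff hq (coprime_hongSetQ_one hcop i) (coprime_hongSetQ_one hcop j) _ _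

theorem hongSetQ_gcd_closed (hcop : Nat.gcd q 1020180525 = 1) (i j : Fin 9) :
    ∃ k, hongSetQ q k = Nat.gcd (hongSetQ q i) (hongSetQ q j) := by
  have base_closed : ∀ i j, ∃ k, hongSetQ 1 k = Nat.gcd (hongSetQ 1 i) (hongSetQ 1 j) ∧
      hongExponent k = min (hongExponent i) (hongExponent j) := by decide +kernel
  obtain ⟨k, hbase, hexp⟩ := base_closed i j
  refine ⟨k, ?_⟩
  rw [hongSetQ_eq_mul_pow q i, hongSetQ_eq_mul_pow q j, hongSetQ_eq_mul_pow q k, hbase, hexp,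
    gcd_mul_pow_mul_pow (coprime_hongSetQ_one hcop i) (coprime_hongSetQ_one hcop j)]

theorem sum_hongMoebius_of_ne_last (hq : 1 < q) (hcop : Nat.gcd q 1020180525 = 1) {j : Fin 9}
    (hj : j ≠ 8) : ∑ k with hongSetQ q j ∣ hongSetQ q k, hongMoebius k = 0 := by
  have base_sum : ∀ j ≠ 8, ∑ k with hongSetQ 1 j ∣ hongSetQ 1 k ∧
      hongExponent j ≤ hongExponent k, hongMoebius k = 0 := by decide +kernel
  simpa only [hongSetQ_dvd_iff hq hcop] using base_sum j hj

theorem continuous_hongDirichletSum (hq : 0 < q) : Continuous (hongDirichletSum q) := by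
  refine continuous_finsetSum _ fun k _ => continuous_const.mul ?_
  have hne : (hongSetQ q k : ℝ) ≠ 0 := mod_cast (hongSetQ_pos hq k).ne'
  exact (Real.continuous_const_rpow hne).comp continuous_neg

theorem hongDirichletSum_eq (q : ℕ) (α : ℝ) :
    hongDirichletSum q α = -1 + 2 * 3 ^ (-α) + 5 ^ (-α) + 7 ^ (-α) - 195 ^ (-α) - 291 ^ (-α)
      - 1407 ^ (-α) - (4025 * q) ^ (-α) + (1020180525 * q) ^ (-α) := by
  simp [hongDirichletSum, hongMoebius, hongSetQ, Fin.sum_univ_castSucc, sub_eq_add_neg]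

theorem hongDirichletSum_one (q : ℕ) :
    hongDirichletSum q 1 = (1 / 4025 - 1 / 1020180525) * (1 - (q : ℝ)⁻¹) := by
  simp only [hongDirichletSum_eq, Real.rpow_neg_one, mul_inv]
  ring

theorem hongDirichletSum_two_neg (q : ℕ) : hongDirichletSum q 2 < 0 := by
  have rpow_neg_two {y : ℝ} (hy : 0 ≤ y) : y ^ (-2 : ℝ) = (y ^ 2)⁻¹ := by
    rw [Real.rpow_neg hy, Real.rpow_two]
  have hnonneg : 0 ≤ ((q : ℝ) ^ 2)⁻¹ := by positivity
  rw [hongDirichletSum_eq]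
  simp only [rpow_neg_two, Nat.ofNat_nonneg, Nat.cast_nonneg, mul_nonneg, mul_pow, mul_inv]
  linarith

theorem exists_one_lt_hongDirichletSum_eq_zero (hq : 1 < q) :
    ∃ α : ℝ, 1 < α ∧ hongDirichletSum q α = 0 := by
  have hinv : (q : ℝ)⁻¹ < 1 := inv_lt_one_of_one_lt₀ (mod_cast hq)
  have one_pos : 0 < hongDirichletSum q 1 := by
    rw [hongDirichletSum_one]
    exact mul_pos (by norm_num) (sub_pos.2 hinv)
  have hq0 : 0 < q := zero_lt_one.trans hq
  obtain ⟨α, hα, hzero⟩ := intermediate_value_Ioo' one_le_two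
    (continuous_hongDirichletSum hq0).continuousOn ⟨hongDirichletSum_two_neg q, one_pos⟩
  exact ⟨α, hα.1, hzero⟩

theorem det_lcm_hongSetQ_eq_zero (hq : 1 < q) (hcop : Nat.gcd q 1020180525 = 1) {α : ℝ}
    (hα : hongDirichletSum q α = 0) :
    (Matrix.of fun i j => (Nat.lcm (hongSetQ q i) (hongSetQ q j) : ℝ) ^ α).det = 0 := by
  have hpos : ∀ i, 0 < hongSetQ q i := hongSetQ_pos (zero_lt_one.trans hq)
  have moebius_sum (j : Fin 9) (hj : hongSetQ q j ≠ hongSetQ q 8) :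
      ∑ k with hongSetQ q j ∣ hongSetQ q k, (hongMoebius k : ℝ) = 0 :=
    mod_cast sum_hongMoebius_of_ne_last hq hcop (ne_of_apply_ne _ hj)
  have moebius_ne_zero : (fun k => (hongMoebius k : ℝ)) ≠ 0 :=
    fun h => by simpa [hongMoebius] using congrFun h 0
  have gcd_det := det_gcd_eq_zero (hongSetQ_gcd_closed hcop) hpos (hongSetQ_dvd_last q)
    moebius_sum moebius_ne_zero (f := fun n => (n : ℝ) ^ (-α)) hα
  rw [det_lcm_rpow hpos, gcd_det, mul_zero, mul_zero]

end HongSet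

/-- For any odd `q > 1` with `gcd (q, 1020180525) = 1`, the set
`S = {1, 3, 5, 7, 195, 291, 1407, 4025q, 1020180525q}` is a GCD closed set of odd positive
integers, and there is a real `α₀ > 1` such that the power LCM matrix
`[lcm (x i) (x j) ^ α₀]` is singular. -/
theorem stmt_19 (q : ℕ) (hq : 1 < q) (hodd : Odd q) (hcop : Nat.gcd q 1020180525 = 1) :
    (∀ i, Odd (hongSetQ q i)) ∧
    (∀ i, 0 < hongSetQ q i) ∧
    (∀ i j, ∃ k, hongSetQ q k = Nat.gcd (hongSetQ q i) (hongSetQ q j)) ∧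
    ∃ α₀ : ℝ, 1 < α₀ ∧
      (Matrix.of fun i j => (Nat.lcm (hongSetQ q i) (hongSetQ q j) : ℝ) ^ α₀).det = 0 := by
  obtain ⟨α₀, hα₀, hzero⟩ := exists_one_lt_hongDirichletSum_eq_zero hq
  exact ⟨odd_hongSetQ hodd, hongSetQ_pos (zero_lt_one.trans hq), hongSetQ_gcd_closed hcop,
    α₀, hα₀, det_lcm_hongSetQ_eq_zero hq hcop hzero⟩
end
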